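/- Let ρ_AB be a bipartite density matrix on ℂ^{d_A}⊗ℂ^{d_B} and let Λ_B be a quantum channel from B to B'' given by Kraus operators {K_l} (each K_l a d_B''×d_B complex matrix with Σ_l K_l†K_l = 1). Then D_{B|A}(ρ_AB) ≥ D_{B''|A}((id_A⊗Λ_B)(ρ_AB)), i.e., the QDI measured on A cannot be increased by any local quantum channel acting on B. -/

import Mathlib

open Matrix Kronecker BigOperators
open scoped ComplexOrder

noncomputable section

/-- The completely dephasing map `Δ`: keeps only the diagonal entries. -/
def deph {n : Type*} [DecidableEq n] (M : Matrix n n ℂ) : Matrix n n ℂ :=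
  Matrix.of fun i j => if i = j then M i j else 0

/-- A density matrix: positive semidefinite with unit trace. -/
def IsDensityMatrix {n : Type*} [Fintype n] (ρ : Matrix n n ℂ) : Prop :=
  ρ.PosSemidef ∧ ρ.trace = 1

/-- Von Neumann entropy (base 2): `S(ρ) = -∑ λ_k log₂ λ_k`. -/
def vnEntropy {n : Type*} [Fintype n] [DecidableEq n] (ρ : Matrix n n ℂ) : ℝ :=
  if h : ρ.IsHermitian then -∑ k, h.eigenvalues k * Real.logb 2 (h.eigenvalues k) else 0

/-- Partial trace over the second factor: `ρ_A = tr_B ρ_AB`. -/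
def ptrB {A B : Type*} [Fintype B] (ρ : Matrix (A × B) (A × B) ℂ) : Matrix A A ℂ :=
  Matrix.of fun a a' => ∑ b, ρ (a, b) (a', b)

/-- Partial trace over the first factor: `ρ_B = tr_A ρ_AB`. -/
def ptrA {A B : Type*} [Fintype A] (ρ : Matrix (A × B) (A × B) ℂ) : Matrix B B ℂ :=
  Matrix.of fun b b' => ∑ a, ρ (a, b) (a, b')

/-- `p_i = tr((|i⟩⟨i|⊗1) ρ_AB)`. -/
def probA {A B : Type*} [Fintype B] (ρ : Matrix (A × B) (A × B) ℂ) (i : A) : ℝ :=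
  (∑ b, ρ (i, b) (i, b)).re

/-- `ρ_{B|i} = tr_A((|i⟩⟨i|⊗1) ρ_AB) / p_i`. -/
def condB {A B : Type*} [Fintype B] (ρ : Matrix (A × B) (A × B) ℂ) (i : A) :
    Matrix B B ℂ :=
  ((probA ρ i : ℝ) : ℂ)⁻¹ • Matrix.of fun b b' => ρ (i, b) (i, b')

/-- Quantum discord based on incoherent measurement:
`D_{B|A}(ρ) = ∑ᵢ pᵢ S(ρ_{B|i}) + S(ρ_A) − S(ρ_AB)`. -/
def QDI {A B : Type*} [Fintype A] [Fintype B] [DecidableEq A] [DecidableEq B]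
    (ρ : Matrix (A × B) (A × B) ℂ) : ℝ :=
  (∑ i, probA ρ i * vnEntropy (condB ρ i)) + vnEntropy (ptrB ρ) - vnEntropy ρ

/-- Dephasing on the first subsystem: `Δ_A ⊗ id`. -/
def dephA {A B : Type*} [DecidableEq A] (ρ : Matrix (A × B) (A × B) ℂ) :
    Matrix (A × B) (A × B) ℂ :=
  Matrix.of fun p q => if p.1 = q.1 then ρ p q else 0

/-- Dephasing on the second subsystem: `id ⊗ Δ_B`. -/
def dephB {A B : Type*} [DecidableEq B] (ρ : Matrix (A × B) (A × B) ℂ) :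
    Matrix (A × B) (A × B) ℂ :=
  Matrix.of fun p q => if p.2 = q.2 then ρ p q else 0

/-- Trace out the last system of a tripartite state on `A × (B × B')`, leaving `A × B`. -/
def ptrB2 {A B B' : Type*} [Fintype B'] (ρ : Matrix (A × B × B') (A × B × B') ℂ) :
    Matrix (A × B) (A × B) ℂ :=
  Matrix.of fun p q => ∑ c, ρ (p.1, p.2, c) (q.1, q.2, c)

/-- Trace out the middle system of a tripartite state on `A × (B × B')`, leaving `A × B'`. -/
def ptrB1 {A B B' : Type*} [Fintype B] (ρ : Matrix (A × B × B') (A × B × B') ℂ) :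
    Matrix (A × B') (A × B') ℂ :=
  Matrix.of fun p q => ∑ b, ρ (p.1, b, p.2) (q.1, b, q.2)

/-!
Since the blocks of `Δ_A ρ` are `pᵢ ρ_{B|i}`, the discord is `D(ρ‖Δ_A ρ) + S(ρ_A) - H(p)`. A channel
on `B` changes neither `ρ_A` nor `p` and commutes with `Δ_A`, so the theorem is the data processing
inequality for the relative entropy `D`.

For the latter, `log r - log s = ∫₀¹ (r - s) / ((1 - t) s + t r) dt` expresses `D(ρ‖σ)` as an
integral over `t` of increasing affine functions of `Re tr (ρ X)`, where `X` solves the Sylvester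
equation `t ρ X + (1 - t) X σ = ρ`. This trace is the maximum over `X` of the concave functional
`2 Re tr (ρ X) - t tr (ρ X Xᴴ) - (1 - t) tr (σ Xᴴ X)`, and by the Kadison–Schwarz inequality the
value at `Y` for the channel outputs is at most the value for the inputs at the image of `Y` under
the adjoint channel.
-/

section KrausMap

variable {R l m n : Type*} [Fintype l] [Fintype n]

/-- The completely positive map with Kraus operators `N`. Its adjoint for the trace pairing is
`krausMap fun k => (N k)ᴴ`, and it is trace preserving when `∑ k, (N k)ᴴ * N k = 1`. -/
def krausMap [Semiring R] [StarRing R] (N : l → Matrix m n R) (X : Matrix n n R) : Matrix m m R :=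
  ∑ k, N k * X * (N k)ᴴ

lemma conjTranspose_krausMap [Semiring R] [StarRing R] (N : l → Matrix m n R)
    (X : Matrix n n R) : (krausMap N X)ᴴ = krausMap N Xᴴ := by
  simp only [krausMap, conjTranspose_sum, conjTranspose_mul, conjTranspose_conjTranspose,
    Matrix.mul_assoc]

lemma krausMap_comm [Fintype m] [Semiring R] [StarRing R] {ι : Type*} [Fintype ι]
    {N : l → Matrix m n R} {P : ι → Matrix n n R} {Q : ι → Matrix m m R}
    (h : ∀ k i, N k * P i = Q i * N k) (X : Matrix n n R) :
    krausMap N (krausMap P X) = krausMap Q (krausMap N X) := by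
  have hstar (k i) : (P i)ᴴ * (N k)ᴴ = (N k)ᴴ * (Q i)ᴴ := by
    simpa only [conjTranspose_mul] using congrArg conjTranspose (h k i)
  simp only [krausMap, Matrix.mul_sum, Matrix.sum_mul]
  rw [Finset.sum_comm]
  refine Finset.sum_congr rfl fun i _ => Finset.sum_congr rfl fun k _ => ?_
  calc N k * (P i * X * (P i)ᴴ) * (N k)ᴴ = N k * P i * X * ((P i)ᴴ * (N k)ᴴ) := by
        simp only [Matrix.mul_assoc]
    _ = Q i * (N k * X * (N k)ᴴ) * (Q i)ᴴ := by
        rw [h, hstar]; simp only [Matrix.mul_assoc]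

lemma krausMap_eq_self_of_commute [Semiring R] [StarRing R] [DecidableEq n]
    {P : l → Matrix n n R} (hP : ∑ k, P k * (P k)ᴴ = 1) {X : Matrix n n R}
    (hX : ∀ k, Commute X (P k)) : krausMap P X = X := by
  simp only [krausMap, ← (hX _).eq, Matrix.mul_assoc]
  rw [← Matrix.mul_sum, hP, Matrix.mul_one]

lemma trace_krausMap_mul [Fintype m] [CommSemiring R] [StarRing R] (N : l → Matrix m n R)
    (X : Matrix n n R) (Y : Matrix m m R) :
    (krausMap N X * Y).trace = (X * krausMap (fun k => (N k)ᴴ) Y).trace := by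
  simp only [krausMap, Matrix.sum_mul, Matrix.mul_sum, trace_sum, conjTranspose_conjTranspose]
  refine Finset.sum_congr rfl fun k _ => ?_
  calc (N k * X * (N k)ᴴ * Y).trace = (N k * (X * ((N k)ᴴ * Y))).trace := by
        simp only [Matrix.mul_assoc]
    _ = (X * ((N k)ᴴ * Y * N k)).trace := by
        rw [trace_mul_comm]; simp only [Matrix.mul_assoc]

lemma trace_krausMap [Fintype m] [CommSemiring R] [StarRing R] [DecidableEq n]
    {N : l → Matrix m n R} (hN : ∑ k, (N k)ᴴ * N k = 1) (X : Matrix n n R) :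
    (krausMap N X).trace = X.trace := by
  classical
  simpa [krausMap, hN] using trace_krausMap_mul N X 1

lemma posSemidef_krausMap [Finite m] [Ring R] [PartialOrder R] [StarRing R] [AddLeftMono R]
    (N : l → Matrix m n R) {X : Matrix n n R} (hX : X.PosSemidef) :
    (krausMap N X).PosSemidef :=
  posSemidef_sum _ fun k _ => hX.mul_mul_conjTranspose_same (N k)

lemma posSemidef_kadison_schwarz [Fintype m] [Ring R] [PartialOrder R] [StarRing R]
    [StarOrderedRing R] [DecidableEq n] {N : l → Matrix m n R} (hN : ∑ k, (N k)ᴴ * N k = 1)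
    (Y : Matrix m m R) :
    (krausMap (fun k => (N k)ᴴ) (Yᴴ * Y) -
      (krausMap (fun k => (N k)ᴴ) Y)ᴴ * krausMap (fun k => (N k)ᴴ) Y).PosSemidef := by
  set X := krausMap (fun k => (N k)ᴴ) Y with hX
  have hexpand (k) : (Y * N k - N k * X)ᴴ * (Y * N k - N k * X) =
      (N k)ᴴ * (Yᴴ * Y) * N k - (N k)ᴴ * Yᴴ * N k * X -
        Xᴴ * ((N k)ᴴ * Y * N k) + Xᴴ * ((N k)ᴴ * N k) * X := by
    simp only [conjTranspose_sub, conjTranspose_mul, Matrix.sub_mul, Matrix.mul_sub,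
      Matrix.mul_assoc]
    abel
  have hXY : ∑ k, (N k)ᴴ * Y * N k = X := by
    simp only [hX, krausMap, conjTranspose_conjTranspose]
  have hXYstar : ∑ k, (N k)ᴴ * Yᴴ * N k = Xᴴ := by
    rw [hX, conjTranspose_krausMap]; simp only [krausMap, conjTranspose_conjTranspose]
  have hsum : ∑ k, (Y * N k - N k * X)ᴴ * (Y * N k - N k * X) =
      krausMap (fun k => (N k)ᴴ) (Yᴴ * Y) - Xᴴ * X := by
    simp only [hexpand, Finset.sum_add_distrib, Finset.sum_sub_distrib, ← Matrix.sum_mul,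
      ← Matrix.mul_sum, hXY, hXYstar, hN, Matrix.mul_one, krausMap, conjTranspose_conjTranspose]
    abel
  rw [← hsum]
  exact posSemidef_sum _ fun k _ => posSemidef_conjTranspose_mul_self _

open scoped MatrixOrder in
lemma re_trace_mul_nonneg {A B : Matrix n n ℂ} (hA : A.PosSemidef) (hB : B.PosSemidef) :
    0 ≤ (A * B).trace.re := by
  classical
  obtain ⟨C, rfl⟩ := CStarAlgebra.nonneg_iff_eq_star_mul_self.mp hB.nonneg
  rw [star_eq_conjTranspose, ← Matrix.mul_assoc, trace_mul_comm, ← Matrix.mul_assoc]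
  exact (Complex.le_def.mp (hA.mul_mul_conjTranspose_same C).trace_nonneg).1

lemma re_trace_mul_dual_krausMap_le [Fintype m] [DecidableEq n] {N : l → Matrix m n ℂ}
    (hN : ∑ k, (N k)ᴴ * N k = 1) {σ : Matrix n n ℂ} (hσ : σ.PosSemidef) (Y : Matrix m m ℂ) :
    (σ * ((krausMap (fun k => (N k)ᴴ) Y)ᴴ * krausMap (fun k => (N k)ᴴ) Y)).trace.re ≤
      (krausMap N σ * (Yᴴ * Y)).trace.re := by
  have h := re_trace_mul_nonneg hσ (posSemidef_kadison_schwarz hN Y)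
  rw [Matrix.mul_sub, trace_sub, Complex.sub_re] at h
  rw [trace_krausMap_mul]
  exact sub_nonneg.mp h

lemma mulVec_conjTranspose_of_krausMap_mulVec_eq_zero [Fintype m] {N : l → Matrix m n ℂ}
    {σ : Matrix n n ℂ} (hσ : σ.PosSemidef) {v : m → ℂ} (hv : krausMap N σ *ᵥ v = 0) (k : l) :
    σ *ᵥ ((N k)ᴴ *ᵥ v) = 0 := by
  have hterm (j) : star v ⬝ᵥ (N j * σ * (N j)ᴴ) *ᵥ v =
      star ((N j)ᴴ *ᵥ v) ⬝ᵥ σ *ᵥ ((N j)ᴴ *ᵥ v) := by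
    simp only [star_mulVec, conjTranspose_conjTranspose, ← dotProduct_mulVec, mulVec_mulVec,
      Matrix.mul_assoc]
  have hsum : ∑ j, star ((N j)ᴴ *ᵥ v) ⬝ᵥ σ *ᵥ ((N j)ᴴ *ᵥ v) = 0 := by
    rw [krausMap] at hv
    simp only [← hterm, ← dotProduct_sum, ← sum_mulVec, hv, dotProduct_zero]
  rw [Finset.sum_eq_zero_iff_of_nonneg fun j _ => hσ.dotProduct_mulVec_nonneg _] at hsum
  exact (hσ.dotProduct_mulVec_zero_iff _).mp (hsum k (Finset.mem_univ k))

lemma ker_krausMap_le [Fintype m] {N : l → Matrix m n ℂ} {ρ σ : Matrix n n ℂ} (hσ : σ.PosSemidef)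
    (h : LinearMap.ker σ.mulVecLin ≤ LinearMap.ker ρ.mulVecLin) :
    LinearMap.ker (krausMap N σ).mulVecLin ≤ LinearMap.ker (krausMap N ρ).mulVecLin := by
  intro v hv
  have hρ (k) : ρ *ᵥ ((N k)ᴴ *ᵥ v) = 0 :=
    h (mulVec_conjTranspose_of_krausMap_mulVec_eq_zero hσ hv k)
  simp only [LinearMap.mem_ker, mulVecLin_apply, krausMap, sum_mulVec, ← mulVec_mulVec, hρ,
    mulVec_zero, Finset.sum_const_zero]

end KrausMap

section SylvesterFunctional

variable {l m n : Type*} [Fintype l] [Fintype m] [Fintype n] {a b : ℝ} {ρ σ : Matrix n n ℂ}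

/-- The concave quadratic functional of `X` whose stationary points are the solutions of the
Sylvester equation `a ρ X + b X σ = ρ`. -/
def sylvesterFunctional (a b : ℝ) (ρ σ X : Matrix n n ℂ) : ℝ :=
  2 * (ρ * X).trace.re - a * (ρ * (X * Xᴴ)).trace.re - b * (σ * (Xᴴ * X)).trace.re

lemma sylvesterFunctional_le_dual_krausMap [DecidableEq n] (ha : 0 ≤ a) (hb : 0 ≤ b)
    (hρ : ρ.PosSemidef) (hσ : σ.PosSemidef) {N : l → Matrix m n ℂ}
    (hN : ∑ k, (N k)ᴴ * N k = 1) (Y : Matrix m m ℂ) :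
    sylvesterFunctional a b (krausMap N ρ) (krausMap N σ) Y ≤
      sylvesterFunctional a b ρ σ (krausMap (fun k => (N k)ᴴ) Y) := by
  have hρY := re_trace_mul_dual_krausMap_le hN hρ Yᴴ
  have hσY := re_trace_mul_dual_krausMap_le hN hσ Y
  rw [← conjTranspose_krausMap, conjTranspose_conjTranspose, conjTranspose_conjTranspose] at hρY
  unfold sylvesterFunctional
  rw [trace_krausMap_mul]
  gcongr

/-- Completing the square around a solution `X` of the Sylvester equation. -/
lemma sylvesterFunctional_eq_sub (hρ : ρ.IsHermitian) (hσ : σ.IsHermitian) {X : Matrix n n ℂ}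
    (hX : a • (ρ * X) + b • (X * σ) = ρ) (Z : Matrix n n ℂ) :
    sylvesterFunctional a b ρ σ Z = (ρ * X).trace.re -
      a * (ρ * ((Z - X) * (Z - X)ᴴ)).trace.re - b * (σ * ((Z - X)ᴴ * (Z - X))).trace.re := by
  have hρZ (Z : Matrix n n ℂ) : (ρ * Z).trace.re =
      a * (ρ * (Z * Xᴴ)).trace.re + b * (σ * (Xᴴ * Z)).trace.re := by
    have hX' : ρ = a • (Xᴴ * ρ) + b • (σ * Xᴴ) := by
      simpa [hρ.eq, hσ.eq] using (congrArg conjTranspose hX).symm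
    have hcycle : (Xᴴ * (ρ * Z)).trace = (ρ * (Z * Xᴴ)).trace := by
      rw [trace_mul_comm, Matrix.mul_assoc]
    conv_lhs => rw [hX']
    simp only [Matrix.add_mul, Matrix.smul_mul, trace_add, trace_smul, Complex.add_re,
      Complex.smul_re, smul_eq_mul, hcycle, Matrix.mul_assoc]
  have hρsymm : (ρ * (X * Zᴴ)).trace.re = (ρ * (Z * Xᴴ)).trace.re := by
    rw [← Complex.conj_re, ← Complex.star_def, ← trace_conjTranspose, trace_mul_comm ρ]
    simp only [conjTranspose_mul, conjTranspose_conjTranspose, hρ.eq, Matrix.mul_assoc]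
  have hσsymm : (σ * (Zᴴ * X)).trace.re = (σ * (Xᴴ * Z)).trace.re := by
    rw [← Complex.conj_re, ← Complex.star_def, ← trace_conjTranspose, trace_mul_comm σ]
    simp only [conjTranspose_mul, conjTranspose_conjTranspose, hσ.eq, Matrix.mul_assoc]
  simp only [sylvesterFunctional, conjTranspose_sub, Matrix.mul_sub, Matrix.sub_mul, trace_sub,
    Complex.sub_re, hρsymm, hσsymm]
  linear_combination 2 * hρZ Z - hρZ X

lemma re_trace_krausMap_mul_le_of_sylvester [DecidableEq n] (ha : 0 ≤ a) (hb : 0 ≤ b)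
    (hρ : ρ.PosSemidef) (hσ : σ.PosSemidef) {N : l → Matrix m n ℂ}
    (hN : ∑ k, (N k)ᴴ * N k = 1) {X : Matrix n n ℂ} (hX : a • (ρ * X) + b • (X * σ) = ρ)
    {Y : Matrix m m ℂ}
    (hY : a • (krausMap N ρ * Y) + b • (Y * krausMap N σ) = krausMap N ρ) :
    (krausMap N ρ * Y).trace.re ≤ (ρ * X).trace.re := by
  set Z := krausMap (fun k => (N k)ᴴ) Y
  have hρZ := re_trace_mul_nonneg hρ (posSemidef_self_mul_conjTranspose (Z - X))
  have hσZ := re_trace_mul_nonneg hσ (posSemidef_conjTranspose_mul_self (Z - X))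
  calc (krausMap N ρ * Y).trace.re
      = sylvesterFunctional a b (krausMap N ρ) (krausMap N σ) Y := by
        rw [sylvesterFunctional_eq_sub (posSemidef_krausMap N hρ).1
          (posSemidef_krausMap N hσ).1 hY]
        simp
    _ ≤ sylvesterFunctional a b ρ σ Z := sylvesterFunctional_le_dual_krausMap ha hb hρ hσ hN Y
    _ ≤ (ρ * X).trace.re := by
        rw [sylvesterFunctional_eq_sub hρ.1 hσ.1 hX]
        linarith [mul_nonneg ha hρZ, mul_nonneg hb hσZ]

end SylvesterFunctional

section EigenOverlap

variable {n : Type*} [Fintype n] [DecidableEq n] {A B : Matrix n n ℂ}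

/-- The squared overlaps `|⟨uᵢ, vⱼ⟩|²` of the eigenbases of two Hermitian matrices, which carry the
spectral form of traces such as `tr (f(A) g(B))`. -/
def eigenOverlap (hA : A.IsHermitian) (hB : B.IsHermitian) (i j : n) : ℝ :=
  Complex.normSq (((hA.eigenvectorUnitary : Matrix n n ℂ)ᴴ * hB.eigenvectorUnitary) i j)

lemma conjTranspose_eigenvectorUnitary_mul_self (hA : A.IsHermitian) :
    (hA.eigenvectorUnitary : Matrix n n ℂ)ᴴ * hA.eigenvectorUnitary = 1 :=
  Unitary.coe_star_mul_self hA.eigenvectorUnitary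

lemma cfc_eq_eigenvectorUnitary_conj (hA : A.IsHermitian) (f : ℝ → ℝ) :
    cfc f A = hA.eigenvectorUnitary * diagonal (fun i => (f (hA.eigenvalues i) : ℂ)) *
      (hA.eigenvectorUnitary : Matrix n n ℂ)ᴴ :=
  hA.cfc_eq f

lemma eq_eigenvectorUnitary_conj (hA : A.IsHermitian) :
    A = hA.eigenvectorUnitary * diagonal (fun i => (hA.eigenvalues i : ℂ)) *
      (hA.eigenvectorUnitary : Matrix n n ℂ)ᴴ :=
  hA.spectral_theorem

lemma trace_cfc (hA : A.IsHermitian) (f : ℝ → ℝ) :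
    (cfc f A).trace = ((∑ i, f (hA.eigenvalues i) : ℝ) : ℂ) := by
  rw [cfc_eq_eigenvectorUnitary_conj hA, trace_mul_comm, ← Matrix.mul_assoc,
    conjTranspose_eigenvectorUnitary_mul_self, Matrix.one_mul, trace_diagonal, Complex.ofReal_sum]

lemma re_trace_cfc_mul_cfc (hA : A.IsHermitian) (hB : B.IsHermitian) (f g : ℝ → ℝ) :
    (cfc f A * cfc g B).trace.re =
      ∑ i, ∑ j, eigenOverlap hA hB i j * (f (hA.eigenvalues i) * g (hB.eigenvalues j)) := by
  set U : Matrix n n ℂ := ↑hA.eigenvectorUnitary with hU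
  set V : Matrix n n ℂ := ↑hB.eigenvectorUnitary with hV
  set D : Matrix n n ℂ := diagonal fun i => (f (hA.eigenvalues i) : ℂ) with hD
  set E : Matrix n n ℂ := diagonal fun j => (g (hB.eigenvalues j) : ℂ) with hE
  have hcycle : (cfc f A * cfc g B).trace = (D * ((Uᴴ * V) * E * (Uᴴ * V)ᴴ)).trace := by
    rw [cfc_eq_eigenvectorUnitary_conj hA, cfc_eq_eigenvectorUnitary_conj hB, Matrix.mul_assoc,
      Matrix.mul_assoc, trace_mul_comm]
    simp only [conjTranspose_mul, conjTranspose_conjTranspose, Matrix.mul_assoc, hU, hV, hD, hE]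
  rw [hcycle, trace, Complex.re_sum]
  refine Finset.sum_congr rfl fun i _ => ?_
  rw [diag_apply, hD, diagonal_mul, Complex.re_ofReal_mul, mul_apply, Complex.re_sum,
    Finset.mul_sum]
  refine Finset.sum_congr rfl fun j _ => ?_
  rw [hE, mul_diagonal, conjTranspose_apply, Complex.star_def, mul_right_comm, Complex.mul_conj,
    ← Complex.ofReal_mul, Complex.ofReal_re, eigenOverlap]
  ring

lemma eigenOverlap_mul_eigenvalue_eq_zero (hA : A.IsHermitian) (hB : B.IsHermitian)
    (h : LinearMap.ker B.mulVecLin ≤ LinearMap.ker A.mulVecLin) {j : n}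
    (hj : hB.eigenvalues j = 0) (i : n) : eigenOverlap hA hB i j * hA.eigenvalues i = 0 := by
  set U : Matrix n n ℂ := ↑hA.eigenvectorUnitary with hU
  set v : n → ℂ := (hB.eigenvectorUnitary : Matrix n n ℂ).col j
  have hAv : A *ᵥ v = 0 := by
    have hBv : B *ᵥ v = hB.eigenvalues j • v := hB.mulVec_eigenvectorBasis j
    exact h (by rw [LinearMap.mem_ker, mulVecLin_apply, hBv, hj, zero_smul])
  have hUA : Uᴴ * A = diagonal (fun i => (hA.eigenvalues i : ℂ)) * Uᴴ := by
    conv_lhs => rw [eq_eigenvectorUnitary_conj hA]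
    rw [← Matrix.mul_assoc, ← Matrix.mul_assoc, conjTranspose_eigenvectorUnitary_mul_self,
      Matrix.one_mul]
  have hentry : (hA.eigenvalues i : ℂ) * (Uᴴ * hB.eigenvectorUnitary) i j = 0 := by
    calc (hA.eigenvalues i : ℂ) * (Uᴴ * hB.eigenvectorUnitary) i j = (Uᴴ *ᵥ (A *ᵥ v)) i := by
          rw [mulVec_mulVec, hUA, ← mulVec_mulVec, mulVec_diagonal]; rfl
      _ = 0 := by rw [hAv, mulVec_zero, Pi.zero_apply]
  rcases mul_eq_zero.mp hentry with hi | hij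
  · rw [Complex.ofReal_eq_zero.mp hi, mul_zero]
  · rw [eigenOverlap, ← hU, hij, map_zero, zero_mul]

lemma exists_sylvester_solution_diagonal {a b : ℝ} {r s : n → ℝ} (ha : 0 < a) (hb : 0 ≤ b)
    (hr : ∀ i, 0 ≤ r i) (hs : ∀ j, 0 ≤ s j) (W : Matrix n n ℂ) : ∃ X : Matrix n n ℂ,
      a • (diagonal (fun i => (r i : ℂ)) * X) + b • (X * diagonal fun j => (s j : ℂ)) =
        diagonal (fun i => (r i : ℂ)) * W ∧
      (diagonal (fun i => (r i : ℂ)) * X * Wᴴ).trace.re =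
        ∑ i, ∑ j, Complex.normSq (W i j) * (r i ^ 2 / (a * r i + b * s j)) := by
  refine ⟨of fun i j => ((r i / (a * r i + b * s j) : ℝ) : ℂ) * W i j, ?_, ?_⟩
  · ext i j
    have hscalar : a * (r i * (r i / (a * r i + b * s j))) +
        b * (r i / (a * r i + b * s j) * s j) = r i := by
      rcases (hr i).eq_or_lt' with hi | hi
      · simp [hi]
      · have : a * r i + b * s j ≠ 0 :=
          (add_pos_of_pos_of_nonneg (mul_pos ha hi) (mul_nonneg hb (hs j))).ne'
        field_simp
    have hcast := congrArg Complex.ofReal hscalar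
    simp only [Complex.ofReal_add, Complex.ofReal_mul] at hcast
    simp only [Matrix.add_apply, Matrix.smul_apply, diagonal_mul, mul_diagonal, of_apply,
      Complex.real_smul]
    linear_combination W i j * hcast
  · rw [trace, Complex.re_sum]
    refine Finset.sum_congr rfl fun i _ => ?_
    rw [diag_apply, mul_apply, Complex.re_sum]
    refine Finset.sum_congr rfl fun j _ => ?_
    rw [diagonal_mul, of_apply, conjTranspose_apply, Complex.star_def, mul_assoc, mul_assoc,
      Complex.mul_conj, ← Complex.ofReal_mul, ← Complex.ofReal_mul, Complex.ofReal_re]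
    ring

lemma exists_sylvester_solution (hA : A.PosSemidef) (hB : B.PosSemidef) {a b : ℝ} (ha : 0 < a)
    (hb : 0 ≤ b) : ∃ X : Matrix n n ℂ, a • (A * X) + b • (X * B) = A ∧
      (A * X).trace.re = ∑ i, ∑ j, eigenOverlap hA.1 hB.1 i j *
        (hA.1.eigenvalues i ^ 2 / (a * hA.1.eigenvalues i + b * hB.1.eigenvalues j)) := by
  set U : Matrix n n ℂ := ↑hA.1.eigenvectorUnitary
  set V : Matrix n n ℂ := ↑hB.1.eigenvectorUnitary
  set D : Matrix n n ℂ := diagonal fun i => (hA.1.eigenvalues i : ℂ)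
  set E : Matrix n n ℂ := diagonal fun j => (hB.1.eigenvalues j : ℂ)
  have hAD : A = U * D * Uᴴ := eq_eigenvectorUnitary_conj hA.1
  have hBE : B = V * E * Vᴴ := eq_eigenvectorUnitary_conj hB.1
  have hUU : Uᴴ * U = 1 := conjTranspose_eigenvectorUnitary_mul_self hA.1
  have hVV : Vᴴ * V = 1 := conjTranspose_eigenvectorUnitary_mul_self hB.1
  obtain ⟨X, hX, htr⟩ : ∃ X : Matrix n n ℂ, a • (D * X) + b • (X * E) = D * (Uᴴ * V) ∧
      (D * X * (Uᴴ * V)ᴴ).trace.re = ∑ i, ∑ j, eigenOverlap hA.1 hB.1 i j *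
        (hA.1.eigenvalues i ^ 2 / (a * hA.1.eigenvalues i + b * hB.1.eigenvalues j)) :=
    exists_sylvester_solution_diagonal ha hb hA.eigenvalues_nonneg hB.eigenvalues_nonneg _
  have hAX : A * (U * X * Vᴴ) = U * (D * X) * Vᴴ := by
    calc A * (U * X * Vᴴ) = U * D * (Uᴴ * U) * X * Vᴴ := by
          rw [hAD]; simp only [Matrix.mul_assoc]
      _ = U * (D * X) * Vᴴ := by rw [hUU, Matrix.mul_one, Matrix.mul_assoc U]
  have hXB : U * X * Vᴴ * B = U * (X * E) * Vᴴ := by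
    calc U * X * Vᴴ * B = U * X * (Vᴴ * V) * E * Vᴴ := by
          rw [hBE]; simp only [Matrix.mul_assoc]
      _ = U * (X * E) * Vᴴ := by rw [hVV, Matrix.mul_one, Matrix.mul_assoc U]
  refine ⟨U * X * Vᴴ, ?_, ?_⟩
  · calc a • (A * (U * X * Vᴴ)) + b • (U * X * Vᴴ * B)
        = U * (a • (D * X) + b • (X * E)) * Vᴴ := by
          simp only [hAX, hXB, Matrix.mul_add, Matrix.add_mul, Matrix.mul_smul, Matrix.smul_mul]
      _ = U * D * Uᴴ * (V * Vᴴ) := by rw [hX]; simp only [Matrix.mul_assoc]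
      _ = A := by rw [mul_eq_one_comm.mp hVV, Matrix.mul_one, ← hAD]
  · rw [← htr, hAX, trace_mul_comm, ← Matrix.mul_assoc, trace_mul_comm, conjTranspose_mul,
      conjTranspose_conjTranspose]

end EigenOverlap

section LogSegment

variable {r s : ℝ}

lemma segment_pos (hr : 0 < r) (hs : 0 < s) {t : ℝ} (ht : t ∈ Set.Icc (0 : ℝ) 1) :
    0 < (1 - t) * s + t * r :=
  convex_Ioi (0 : ℝ) hs hr (sub_nonneg.mpr ht.2) ht.1 (sub_add_cancel 1 t)

lemma intervalIntegrable_sub_div_segment (hr : 0 < r) (hs : 0 < s) :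
    IntervalIntegrable (fun t => (r - s) / ((1 - t) * s + t * r)) MeasureTheory.volume 0 1 := by
  refine ContinuousOn.intervalIntegrable (ContinuousOn.div (by fun_prop) (by fun_prop) ?_)
  intro t ht
  rw [Set.uIcc_of_le zero_le_one] at ht
  exact (segment_pos hr hs ht).ne'

lemma integral_sub_div_segment (hr : 0 < r) (hs : 0 < s) :
    ∫ t in (0 : ℝ)..1, (r - s) / ((1 - t) * s + t * r) = Real.log r - Real.log s := by
  have hderiv : ∀ t ∈ Set.uIcc (0 : ℝ) 1, HasDerivAt
      (fun t => Real.log ((1 - t) * s + t * r)) ((r - s) / ((1 - t) * s + t * r)) t := by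
    intro t ht
    rw [Set.uIcc_of_le zero_le_one] at ht
    have hsegment : HasDerivAt (fun t => (1 - t) * s + t * r) (r - s) t :=
      ((((hasDerivAt_id' t).const_sub 1).mul_const s).add
        ((hasDerivAt_id' t).mul_const r)).congr_deriv (by ring)
    exact hsegment.log (segment_pos hr hs ht).ne'
  rw [intervalIntegral.integral_eq_sub_of_hasDerivAt hderiv
    (intervalIntegrable_sub_div_segment hr hs)]
  norm_num

lemma mul_sub_div_segment (hr : 0 ≤ r) (hs : 0 ≤ s) {t : ℝ} (ht : t ∈ Set.Ioo (0 : ℝ) 1) :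
    r * ((r - s) / ((1 - t) * s + t * r)) = (r ^ 2 / (t * r + (1 - t) * s) - r) / (1 - t) := by
  have ht' : 0 < 1 - t := sub_pos.mpr ht.2
  rcases hr.eq_or_lt' with rfl | hr
  · simp
  · have hden : t * r + (1 - t) * s ≠ 0 :=
      (add_pos_of_pos_of_nonneg (mul_pos ht.1 hr) (mul_nonneg ht'.le hs)).ne'
    rw [add_comm ((1 - t) * s), eq_div_iff ht'.ne', eq_sub_iff_add_eq, eq_div_iff hden]
    linear_combination r * (1 - t) * div_mul_cancel₀ (r - s) hden

end LogSegment

section RelEntropy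

variable {l m n : Type*} [Fintype l] [Fintype m] [Fintype n] [DecidableEq m] [DecidableEq n]
  {ρ σ : Matrix n n ℂ}

/-- The quantum relative entropy `D(ρ‖σ) = tr ρ (log₂ ρ - log₂ σ)`. As `Real.log 0 = 0`, this is the
usual quantity when `ker σ ≤ ker ρ`, and a junk value instead of `∞` otherwise. -/
def relEntropy (ρ σ : Matrix n n ℂ) : ℝ :=
  (ρ * (cfc Real.log ρ - cfc Real.log σ)).trace.re / Real.log 2

lemma self_mul_cfc (hρ : ρ.IsHermitian) (f : ℝ → ℝ) : ρ * cfc f ρ = cfc (fun x => x * f x) ρ := by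
  have hcont (g : ℝ → ℝ) : ContinuousOn g (spectrum ℝ ρ) := ρ.finite_real_spectrum.continuousOn g
  rw [cfc_mul (fun x => x) f ρ (hcont _) (hcont _), cfc_id' ℝ ρ hρ.isSelfAdjoint]

lemma relEntropy_eq_sum (hρ : ρ.IsHermitian) (hσ : σ.IsHermitian) :
    relEntropy ρ σ = (∑ i, ∑ j, eigenOverlap hρ hσ i j * (hρ.eigenvalues i *
      (Real.log (hρ.eigenvalues i) - Real.log (hσ.eigenvalues j)))) / Real.log 2 := by
  have hρlog := re_trace_cfc_mul_cfc hρ hσ (fun x => x * Real.log x) (fun _ => 1)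
  have hσlog := re_trace_cfc_mul_cfc hρ hσ (fun x => x) Real.log
  rw [cfc_const_one ℝ σ hσ.isSelfAdjoint, Matrix.mul_one, ← self_mul_cfc hρ] at hρlog
  rw [cfc_id' ℝ ρ hρ.isSelfAdjoint] at hσlog
  rw [relEntropy, Matrix.mul_sub, trace_sub, Complex.sub_re, hρlog, hσlog]
  simp only [← Finset.sum_sub_distrib, mul_one, ← mul_sub]

/-- The integrand in `D(ρ‖σ) log 2 = ∫₀¹ ∑ᵢⱼ cᵢⱼ rᵢ (rᵢ - sⱼ) / ((1 - t) sⱼ + t rᵢ) dt`, where `r`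
and `s` are the eigenvalues of `ρ` and `σ`, and `c` is their `eigenOverlap`. -/
def relEntropyDensity (hρ : ρ.IsHermitian) (hσ : σ.IsHermitian) (t : ℝ) : ℝ :=
  ∑ i, ∑ j, eigenOverlap hρ hσ i j * (hρ.eigenvalues i *
    ((hρ.eigenvalues i - hσ.eigenvalues j) /
      ((1 - t) * hσ.eigenvalues j + t * hρ.eigenvalues i)))

lemma eigenOverlap_mul_eigenvalue_eq_zero_or_pos (hρ : ρ.PosSemidef) (hσ : σ.PosSemidef)
    (h : LinearMap.ker σ.mulVecLin ≤ LinearMap.ker ρ.mulVecLin) (i j : n) :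
    eigenOverlap hρ.1 hσ.1 i j * hρ.1.eigenvalues i = 0 ∨
      0 < hρ.1.eigenvalues i ∧ 0 < hσ.1.eigenvalues j := by
  rcases (hρ.eigenvalues_nonneg i).eq_or_lt' with hi | hi
  · exact .inl (by rw [hi, mul_zero])
  · rcases (hσ.eigenvalues_nonneg j).eq_or_lt' with hj | hj
    · exact .inl (eigenOverlap_mul_eigenvalue_eq_zero hρ.1 hσ.1 h hj i)
    · exact .inr ⟨hi, hj⟩

lemma intervalIntegrable_relEntropyDensity_term (hρ : ρ.PosSemidef) (hσ : σ.PosSemidef)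
    (h : LinearMap.ker σ.mulVecLin ≤ LinearMap.ker ρ.mulVecLin) (i j : n) :
    IntervalIntegrable (fun t => eigenOverlap hρ.1 hσ.1 i j * (hρ.1.eigenvalues i *
      ((hρ.1.eigenvalues i - hσ.1.eigenvalues j) /
        ((1 - t) * hσ.1.eigenvalues j + t * hρ.1.eigenvalues i)))) MeasureTheory.volume 0 1 := by
  simp only [← mul_assoc (eigenOverlap hρ.1 hσ.1 i j)]
  rcases eigenOverlap_mul_eigenvalue_eq_zero_or_pos hρ hσ h i j with hzero | ⟨hi, hj⟩
  · simp only [hzero, zero_mul]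
    exact intervalIntegrable_const
  · exact (intervalIntegrable_sub_div_segment hi hj).const_mul _

lemma intervalIntegrable_relEntropyDensity (hρ : ρ.PosSemidef) (hσ : σ.PosSemidef)
    (h : LinearMap.ker σ.mulVecLin ≤ LinearMap.ker ρ.mulVecLin) :
    IntervalIntegrable (relEntropyDensity hρ.1 hσ.1) MeasureTheory.volume 0 1 := by
  change IntervalIntegrable (fun t => relEntropyDensity hρ.1 hσ.1 t) _ _ _
  simpa only [relEntropyDensity, Finset.sum_fn] using IntervalIntegrable.sum Finset.univ
    fun i _ => IntervalIntegrable.sum Finset.univ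
      fun j _ => intervalIntegrable_relEntropyDensity_term hρ hσ h i j

lemma relEntropy_eq_integral (hρ : ρ.PosSemidef) (hσ : σ.PosSemidef)
    (h : LinearMap.ker σ.mulVecLin ≤ LinearMap.ker ρ.mulVecLin) :
    relEntropy ρ σ = (∫ t in (0 : ℝ)..1, relEntropyDensity hρ.1 hσ.1 t) / Real.log 2 := by
  have hterm := intervalIntegrable_relEntropyDensity_term hρ hσ h
  rw [relEntropy_eq_sum hρ.1 hσ.1]
  simp only [relEntropyDensity]
  rw [intervalIntegral.integral_finsetSum fun i _ => by
    simpa only [Finset.sum_fn] using IntervalIntegrable.sum Finset.univ fun j _ => hterm i j]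
  congr 1
  refine Finset.sum_congr rfl fun i _ => ?_
  rw [intervalIntegral.integral_finsetSum fun j _ => hterm i j]
  refine Finset.sum_congr rfl fun j _ => ?_
  simp only [← mul_assoc (eigenOverlap hρ.1 hσ.1 i j), intervalIntegral.integral_const_mul]
  rcases eigenOverlap_mul_eigenvalue_eq_zero_or_pos hρ hσ h i j with hzero | ⟨hi, hj⟩
  · rw [hzero, zero_mul, zero_mul]
  · rw [integral_sub_div_segment hi hj]

lemma relEntropyDensity_eq (hρ : ρ.PosSemidef) (hσ : σ.PosSemidef) {t : ℝ}
    (ht : t ∈ Set.Ioo (0 : ℝ) 1) : relEntropyDensity hρ.1 hσ.1 t =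
      ((∑ i, ∑ j, eigenOverlap hρ.1 hσ.1 i j * (hρ.1.eigenvalues i ^ 2 /
        (t * hρ.1.eigenvalues i + (1 - t) * hσ.1.eigenvalues j))) - ρ.trace.re) / (1 - t) := by
  have htrace := re_trace_cfc_mul_cfc hρ.1 hσ.1 (fun x => x) (fun _ => 1)
  rw [cfc_id' ℝ ρ hρ.1.isSelfAdjoint, cfc_const_one ℝ σ hσ.1.isSelfAdjoint,
    Matrix.mul_one] at htrace
  rw [htrace, relEntropyDensity]
  simp only [← Finset.sum_sub_distrib, Finset.sum_div]
  refine Finset.sum_congr rfl fun i _ => Finset.sum_congr rfl fun j _ => ?_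
  rw [mul_sub_div_segment (hρ.eigenvalues_nonneg i) (hσ.eigenvalues_nonneg j) ht]
  ring

lemma relEntropyDensity_krausMap_le (hρ : ρ.PosSemidef) (hσ : σ.PosSemidef)
    {N : l → Matrix m n ℂ} (hN : ∑ k, (N k)ᴴ * N k = 1) {t : ℝ} (ht : t ∈ Set.Ioo (0 : ℝ) 1) :
    relEntropyDensity (posSemidef_krausMap N hρ).1 (posSemidef_krausMap N hσ).1 t ≤
      relEntropyDensity hρ.1 hσ.1 t := by
  have ht' : 0 ≤ 1 - t := sub_nonneg.mpr ht.2.le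
  have hNρ := posSemidef_krausMap N hρ
  have hNσ := posSemidef_krausMap N hσ
  obtain ⟨X, hX, hXtrace⟩ := exists_sylvester_solution hρ hσ ht.1 ht'
  obtain ⟨Y, hY, hYtrace⟩ := exists_sylvester_solution hNρ hNσ ht.1 ht'
  rw [relEntropyDensity_eq hρ hσ ht, relEntropyDensity_eq hNρ hNσ ht, ← hXtrace, ← hYtrace,
    trace_krausMap hN]
  exact div_le_div_of_nonneg_right (sub_le_sub_right
    (re_trace_krausMap_mul_le_of_sylvester ht.1.le ht' hρ hσ hN hX hY) _) ht'

theorem relEntropy_krausMap_le (hρ : ρ.PosSemidef) (hσ : σ.PosSemidef)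
    (h : LinearMap.ker σ.mulVecLin ≤ LinearMap.ker ρ.mulVecLin) {N : l → Matrix m n ℂ}
    (hN : ∑ k, (N k)ᴴ * N k = 1) :
    relEntropy (krausMap N ρ) (krausMap N σ) ≤ relEntropy ρ σ := by
  have hNρ := posSemidef_krausMap N hρ
  have hNσ := posSemidef_krausMap N hσ
  have hker := ker_krausMap_le (N := N) hσ h
  rw [relEntropy_eq_integral hρ hσ h, relEntropy_eq_integral hNρ hNσ hker]
  gcongr
  exact intervalIntegral.integral_mono_on_of_le_Ioo zero_le_one
    (intervalIntegrable_relEntropyDensity hNρ hNσ hker)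
    (intervalIntegrable_relEntropyDensity hρ hσ h)
    fun t ht => relEntropyDensity_krausMap_le hρ hσ hN ht

end RelEntropy

section VnEntropy

variable {l n o : Type*} [Fintype l] [Fintype n] [DecidableEq n] [Fintype o] [DecidableEq o]
  {M : Matrix n n ℂ}

lemma vnEntropy_eq_trace_cfc (hM : M.IsHermitian) :
    vnEntropy M = (cfc Real.negMulLog M).trace.re / Real.log 2 := by
  rw [vnEntropy, dif_pos hM, trace_cfc hM, Complex.ofReal_re, ← Finset.sum_neg_distrib,
    Finset.sum_div]
  refine Finset.sum_congr rfl fun i _ => ?_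
  rw [Real.negMulLog, Real.logb]
  ring

lemma vnEntropy_eq_neg_trace_mul_log (hM : M.IsHermitian) :
    vnEntropy M = -(M * cfc Real.log M).trace.re / Real.log 2 := by
  rw [vnEntropy_eq_trace_cfc hM, self_mul_cfc hM, Real.negMulLog_eq_neg, cfc_neg, trace_neg,
    Complex.neg_re]

lemma vnEntropy_smul (hM : M.IsHermitian) (c : ℝ) :
    vnEntropy (c • M) = c * vnEntropy M + Real.negMulLog c * M.trace.re / Real.log 2 := by
  have hcM : (c • M).IsHermitian := hM.smul (IsSelfAdjoint.all c)
  have htrace : M.trace = ((∑ i, hM.eigenvalues i : ℝ) : ℂ) := by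
    simpa only [cfc_id' ℝ M hM.isSelfAdjoint] using trace_cfc hM fun x => x
  rw [vnEntropy_eq_trace_cfc hcM, vnEntropy_eq_trace_cfc hM,
    ← cfc_comp_const_mul c Real.negMulLog M (Real.continuous_negMulLog.continuousOn)
      hM.isSelfAdjoint, trace_cfc hM, trace_cfc hM, htrace]
  simp only [Complex.ofReal_re, Real.negMulLog_mul, Finset.sum_add_distrib, ← Finset.sum_mul,
    ← Finset.mul_sum]
  ring

lemma vnEntropy_eq_sum_roots_charpoly (hM : M.IsHermitian) :
    vnEntropy M = (M.charpoly.roots.map fun z => Real.negMulLog z.re).sum / Real.log 2 := by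
  rw [vnEntropy_eq_trace_cfc hM, trace_cfc hM, hM.roots_charpoly_eq_eigenvalues,
    Multiset.map_map]
  rfl

lemma charpoly_blockDiagonal {R : Type*} [CommRing R] (M : o → Matrix n n R) :
    (blockDiagonal M).charpoly = ∏ i, (M i).charpoly := by
  have hcharmatrix : (blockDiagonal M).charmatrix = blockDiagonal fun i => (M i).charmatrix := by
    ext ⟨a, i⟩ ⟨b, j⟩
    by_cases hij : i = j <;> by_cases hab : a = b <;> simp [blockDiagonal_apply, hij, hab]
  simp only [charpoly, hcharmatrix, det_blockDiagonal]

lemma vnEntropy_blockDiagonal {M : o → Matrix n n ℂ} (hM : ∀ i, (M i).IsHermitian) :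
    vnEntropy (blockDiagonal M) = ∑ i, vnEntropy (M i) := by
  rw [vnEntropy_eq_sum_roots_charpoly (isHermitian_blockDiagonal_iff.mpr hM),
    charpoly_blockDiagonal,
    Polynomial.roots_prod _ _
      (Finset.prod_ne_zero_iff.mpr fun i _ => (charpoly_monic (M i)).ne_zero)]
  simp only [vnEntropy_eq_sum_roots_charpoly (hM _), Multiset.map_bind, Multiset.sum_bind,
    ← Finset.sum_div]
  rfl

lemma vnEntropy_reindex (hM : M.IsHermitian) (e : n ≃ o) :
    vnEntropy (reindex e e M) = vnEntropy M := by
  have hreindex : (reindex e e M).IsHermitian := hM.submatrix e.symm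
  rw [vnEntropy_eq_sum_roots_charpoly hM, vnEntropy_eq_sum_roots_charpoly hreindex,
    charpoly_reindex]

/-- Because `log (krausMap P ρ)` is a fixed point of the adjoint map, it has the same expectation in
`ρ` and in `krausMap P ρ`. -/
lemma relEntropy_krausMap_self {P : l → Matrix n n ℂ} (hP : ∑ k, (P k)ᴴ * P k = 1)
    {ρ : Matrix n n ℂ} (hρ : ρ.IsHermitian) (hcomm : ∀ k, Commute (krausMap P ρ) (P k)ᴴ) :
    relEntropy ρ (krausMap P ρ) = vnEntropy (krausMap P ρ) - vnEntropy ρ := by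
  set σ := krausMap P ρ with hσdef
  have hσ : σ.IsHermitian := by rw [IsHermitian, hσdef, conjTranspose_krausMap, hρ.eq]
  have hlog : krausMap (fun k => (P k)ᴴ) (cfc Real.log σ) = cfc Real.log σ :=
    krausMap_eq_self_of_commute (by simpa only [conjTranspose_conjTranspose] using hP)
      fun k => hσ.isSelfAdjoint.commute_cfc (hcomm k) Real.log
  have htrace : (σ * cfc Real.log σ).trace = (ρ * cfc Real.log σ).trace := by
    calc (σ * cfc Real.log σ).trace
        = (ρ * krausMap (fun k => (P k)ᴴ) (cfc Real.log σ)).trace := trace_krausMap_mul P ρ _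
      _ = (ρ * cfc Real.log σ).trace := by rw [hlog]
  rw [relEntropy, vnEntropy_eq_neg_trace_mul_log hρ, vnEntropy_eq_neg_trace_mul_log hσ, htrace,
    Matrix.mul_sub, trace_sub, Complex.sub_re]
  ring

end VnEntropy

section Dephasing

variable {A B : Type*} [DecidableEq A]

/-- The projection `|i⟩⟨i| ⊗ 1` of the incoherent measurement on the first subsystem. -/
def projA [DecidableEq B] (i : A) : Matrix (A × B) (A × B) ℂ :=
  single i i 1 ⊗ₖ 1

lemma projA_eq_diagonal [DecidableEq B] (i : A) :
    (projA i : Matrix (A × B) (A × B) ℂ) = diagonal fun q => if q.1 = i then 1 else 0 := by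
  rw [projA, ← diagonal_single, ← diagonal_one, diagonal_kronecker_diagonal]
  simp only [Pi.single_apply, mul_one]

lemma conjTranspose_projA [DecidableEq B] (i : A) :
    (projA i : Matrix (A × B) (A × B) ℂ)ᴴ = projA i := by
  rw [projA, conjTranspose_kronecker, conjTranspose_single, star_one, conjTranspose_one]

lemma sum_projA [Fintype A] [DecidableEq B] :
    ∑ i, (projA i : Matrix (A × B) (A × B) ℂ) = 1 := by
  ext p q
  by_cases hpq : p = q <;> simp [projA_eq_diagonal, Matrix.sum_apply, Matrix.one_apply, hpq]

lemma dephA_eq_reindex_blockDiagonal (ρ : Matrix (A × B) (A × B) ℂ) :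
    dephA ρ = reindex (Equiv.prodComm B A) (Equiv.prodComm B A)
      (blockDiagonal fun i => ρ.submatrix (Prod.mk i) (Prod.mk i)) := by
  ext ⟨a, b⟩ ⟨a', b'⟩
  by_cases h : a = a' <;> simp [dephA, blockDiagonal_apply, h]

lemma conjTranspose_projA_mul_self [Fintype A] [Fintype B] [DecidableEq B] (i : A) :
    (projA i : Matrix (A × B) (A × B) ℂ)ᴴ * projA i = projA i := by
  rw [conjTranspose_projA, projA, ← mul_kronecker_mul, single_mul_single_same, mul_one, mul_one]

lemma dephA_eq_krausMap [Fintype A] [Fintype B] [DecidableEq B]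
    (ρ : Matrix (A × B) (A × B) ℂ) : dephA ρ = krausMap projA ρ := by
  ext p q
  simp only [krausMap, conjTranspose_projA, Matrix.sum_apply]
  simp only [projA_eq_diagonal, diagonal_mul, mul_diagonal, dephA, of_apply, ite_mul, one_mul,
    zero_mul, mul_ite, mul_one, mul_zero, Finset.sum_ite_eq, Finset.mem_univ, if_true]

lemma commute_dephA_projA [Fintype A] [Fintype B] [DecidableEq B]
    (ρ : Matrix (A × B) (A × B) ℂ) (i : A) :
    Commute (dephA ρ) (projA i) := by
  rw [projA_eq_diagonal]
  ext p q
  by_cases hpq : p.1 = q.1 <;> simp [dephA, hpq]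

lemma posSemidef_dephA [Finite A] [Finite B] {ρ : Matrix (A × B) (A × B) ℂ}
    (hρ : ρ.PosSemidef) : (dephA ρ).PosSemidef := by
  classical
  have := Fintype.ofFinite A
  have := Fintype.ofFinite B
  exact dephA_eq_krausMap ρ ▸ posSemidef_krausMap projA hρ

lemma ker_dephA_le [Fintype A] [Fintype B] {ρ : Matrix (A × B) (A × B) ℂ} (hρ : ρ.PosSemidef) :
    LinearMap.ker (dephA ρ).mulVecLin ≤ LinearMap.ker ρ.mulVecLin := by
  classical
  intro v hv
  rw [LinearMap.mem_ker, mulVecLin_apply, dephA_eq_krausMap] at hv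
  calc ρ *ᵥ v = ∑ i, ρ *ᵥ ((projA i)ᴴ *ᵥ v) := by
        simp only [conjTranspose_projA, ← mulVec_sum, ← sum_mulVec, sum_projA, one_mulVec]
    _ = 0 := Finset.sum_eq_zero fun i _ =>
        mulVec_conjTranspose_of_krausMap_mulVec_eq_zero hρ hv i

variable [Fintype A] [Fintype B] [DecidableEq B] {ρ : Matrix (A × B) (A × B) ℂ}

lemma vnEntropy_dephA (hρ : ρ.IsHermitian) :
    vnEntropy (dephA ρ) = ∑ i, vnEntropy (ρ.submatrix (Prod.mk i) (Prod.mk i)) := by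
  have hblock (i : A) : (ρ.submatrix (Prod.mk i) (Prod.mk i)).IsHermitian := hρ.submatrix _
  rw [dephA_eq_reindex_blockDiagonal, vnEntropy_reindex (isHermitian_blockDiagonal_iff.mpr hblock),
    vnEntropy_blockDiagonal hblock]

lemma relEntropy_dephA (hρ : ρ.PosSemidef) :
    relEntropy ρ (dephA ρ) = vnEntropy (dephA ρ) - vnEntropy ρ := by
  rw [dephA_eq_krausMap]
  refine relEntropy_krausMap_self ?_ hρ.1 fun i => ?_
  · simp only [conjTranspose_projA_mul_self, sum_projA]
  rw [← dephA_eq_krausMap, conjTranspose_projA]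
  exact commute_dephA_projA ρ i

end Dephasing

section Discord

variable {A B B' L : Type*}

lemma probA_smul_condB [Fintype B] {ρ : Matrix (A × B) (A × B) ℂ} (hρ : ρ.PosSemidef) (i : A) :
    probA ρ i • condB ρ i = ρ.submatrix (Prod.mk i) (Prod.mk i) := by
  have hblock : (ρ.submatrix (Prod.mk i) (Prod.mk i)).PosSemidef := hρ.submatrix _
  rcases eq_or_ne (probA ρ i) 0 with hi | hi
  · have htrace : (ρ.submatrix (Prod.mk i) (Prod.mk i)).trace = 0 :=
      Complex.ext hi (Complex.le_def.mp hblock.trace_nonneg).2.symm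
    rw [hi, zero_smul, hblock.trace_eq_zero_iff.mp htrace]
  · rw [condB, ← Complex.coe_smul, smul_inv_smul₀ (Complex.ofReal_ne_zero.mpr hi)]
    rfl

lemma isHermitian_condB [Fintype B] {ρ : Matrix (A × B) (A × B) ℂ} (hρ : ρ.IsHermitian) (i : A) :
    (condB ρ i).IsHermitian := by
  have hblock : (ρ.submatrix (Prod.mk i) (Prod.mk i)).IsHermitian := hρ.submatrix _
  rw [condB, ← Complex.ofReal_inv, Complex.coe_smul]
  exact hblock.smul (IsSelfAdjoint.all _)

lemma negMulLog_probA_mul_trace_condB [Fintype B] (ρ : Matrix (A × B) (A × B) ℂ) (i : A) :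
    Real.negMulLog (probA ρ i) * (condB ρ i).trace.re = Real.negMulLog (probA ρ i) := by
  rcases eq_or_ne (probA ρ i) 0 with hi | hi
  · rw [hi, Real.negMulLog_zero, zero_mul]
  · have htrace : (condB ρ i).trace.re = 1 := by
      rw [condB, trace_smul, ← Complex.ofReal_inv, smul_eq_mul, Complex.re_ofReal_mul]
      exact inv_mul_cancel₀ hi
    rw [htrace, mul_one]

lemma sum_conjTranspose_one_kronecker_mul_self [Fintype A] [DecidableEq A] [DecidableEq B]
    [Fintype B'] [Fintype L] {K : L → Matrix B' B ℂ} (hK : ∑ l, (K l)ᴴ * K l = 1) :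
    ∑ l, ((1 : Matrix A A ℂ) ⊗ₖ K l)ᴴ * ((1 : Matrix A A ℂ) ⊗ₖ K l) = 1 := by
  simp only [conjTranspose_kronecker, ← mul_kronecker_mul, conjTranspose_one, Matrix.one_mul]
  rw [← one_kronecker_one, ← hK]
  ext p q
  simp [Matrix.sum_apply, Finset.mul_sum]

variable [Fintype A] [DecidableEq A] [Fintype B]

lemma submatrix_krausMap_one_kronecker [Fintype L] (K : L → Matrix B' B ℂ)
    (ρ : Matrix (A × B) (A × B) ℂ) (a a' : A) :
    (krausMap (fun l => (1 : Matrix A A ℂ) ⊗ₖ K l) ρ).submatrix (Prod.mk a) (Prod.mk a') =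
      krausMap K (ρ.submatrix (Prod.mk a) (Prod.mk a')) := by
  ext b b'
  simp [krausMap, Matrix.sum_apply, mul_apply, Fintype.sum_prod_type, one_apply,
    apply_ite (starRingEnd ℂ)]

lemma dephA_krausMap_one_kronecker [Finite B'] [Fintype L] (K : L → Matrix B' B ℂ)
    (ρ : Matrix (A × B) (A × B) ℂ) :
    dephA (krausMap (fun l => (1 : Matrix A A ℂ) ⊗ₖ K l) ρ) =
      krausMap (fun l => (1 : Matrix A A ℂ) ⊗ₖ K l) (dephA ρ) := by
  classical
  have := Fintype.ofFinite B'
  rw [dephA_eq_krausMap, dephA_eq_krausMap, krausMap_comm]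
  intro l i
  simp only [projA, ← mul_kronecker_mul, Matrix.one_mul, Matrix.mul_one]

variable [DecidableEq B]

lemma ptrB_krausMap_one_kronecker [Fintype B'] [Fintype L] {K : L → Matrix B' B ℂ}
    (hK : ∑ l, (K l)ᴴ * K l = 1) (ρ : Matrix (A × B) (A × B) ℂ) :
    ptrB (krausMap (fun l => (1 : Matrix A A ℂ) ⊗ₖ K l) ρ) = ptrB ρ := by
  ext a a'
  calc _ = ((krausMap (fun l => (1 : Matrix A A ℂ) ⊗ₖ K l) ρ).submatrix
        (Prod.mk a) (Prod.mk a')).trace := rfl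
    _ = (ρ.submatrix (Prod.mk a) (Prod.mk a')).trace := by
        rw [submatrix_krausMap_one_kronecker, trace_krausMap hK]

lemma probA_krausMap_one_kronecker [Fintype B'] [Fintype L] {K : L → Matrix B' B ℂ}
    (hK : ∑ l, (K l)ᴴ * K l = 1) (ρ : Matrix (A × B) (A × B) ℂ) (i : A) :
    probA (krausMap (fun l => (1 : Matrix A A ℂ) ⊗ₖ K l) ρ) i = probA ρ i :=
  congrArg (fun M : Matrix A A ℂ => (M i i).re) (ptrB_krausMap_one_kronecker hK ρ)

variable {ρ : Matrix (A × B) (A × B) ℂ}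

lemma sum_probA_mul_vnEntropy_condB (hρ : ρ.PosSemidef) :
    ∑ i, probA ρ i * vnEntropy (condB ρ i) =
      vnEntropy (dephA ρ) - (∑ i, Real.negMulLog (probA ρ i)) / Real.log 2 := by
  rw [vnEntropy_dephA hρ.1, Finset.sum_div, ← Finset.sum_sub_distrib]
  refine Finset.sum_congr rfl fun i _ => ?_
  rw [← probA_smul_condB hρ i, vnEntropy_smul (isHermitian_condB hρ.1 i),
    negMulLog_probA_mul_trace_condB, add_sub_cancel_right]

lemma QDI_eq_relEntropy_dephA_add (hρ : ρ.PosSemidef) :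
    QDI ρ = relEntropy ρ (dephA ρ) + vnEntropy (ptrB ρ) -
      (∑ i, Real.negMulLog (probA ρ i)) / Real.log 2 := by
  rw [QDI, sum_probA_mul_vnEntropy_condB hρ, relEntropy_dephA hρ]
  ring

end Discord

theorem stmt11_general {A B B' L : Type*} [Fintype A] [DecidableEq A] [Fintype B] [DecidableEq B]
    [Fintype B'] [DecidableEq B'] [Fintype L] {ρ : Matrix (A × B) (A × B) ℂ} (hρ : ρ.PosSemidef)
    {K : L → Matrix B' B ℂ} (hK : ∑ l, (K l)ᴴ * K l = 1) :
    QDI (∑ l, ((1 : Matrix A A ℂ) ⊗ₖ K l) * ρ * ((1 : Matrix A A ℂ) ⊗ₖ K l)ᴴ) ≤ QDI ρ := by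
  set N : L → Matrix (A × B') (A × B) ℂ := fun l => (1 : Matrix A A ℂ) ⊗ₖ K l
  have hdpi : relEntropy (krausMap N ρ) (krausMap N (dephA ρ)) ≤ relEntropy ρ (dephA ρ) :=
    relEntropy_krausMap_le hρ (posSemidef_dephA hρ) (ker_dephA_le hρ)
      (sum_conjTranspose_one_kronecker_mul_self hK)
  change QDI (krausMap N ρ) ≤ QDI ρ
  rw [QDI_eq_relEntropy_dephA_add hρ, QDI_eq_relEntropy_dephA_add (posSemidef_krausMap N hρ),
    dephA_krausMap_one_kronecker]
  simp only [N, ptrB_krausMap_one_kronecker hK, probA_krausMap_one_kronecker hK]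
  gcongr

/-- QDI measured on `A` cannot be increased by a local quantum channel
(given by Kraus operators `K_l`, possibly changing the dimension) acting on `B`. -/
theorem stmt11 {dA dB dB'' L : ℕ}
    (ρ : Matrix (Fin dA × Fin dB) (Fin dA × Fin dB) ℂ) (hρ : IsDensityMatrix ρ)
    (K : Fin L → Matrix (Fin dB'') (Fin dB) ℂ)
    (hK : ∑ l, (K l)ᴴ * K l = 1) :
    QDI (∑ l, ((1 : Matrix (Fin dA) (Fin dA) ℂ) ⊗ₖ K l) * ρ *
        ((1 : Matrix (Fin dA) (Fin dA) ℂ) ⊗ₖ K l)ᴴ) ≤ QDI ρ :=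
  stmt11_general hρ.1 hK
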